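/- Let M > 0 be fixed and set Q₁ := (log x)^{M+1}. Then for all x ≥ 2 and all Q with x(log x)^{-M} ≤ Q ≤ x, ∑_{Q₁ < q ≤ Q} (1/φ(q))·log(2Q/q)·∑_{χ primitive mod q} |ψ'_K(x, χ∘N)|² ≪ x·Q·log x, where the inner sum is over primitive Dirichlet characters modulo q and the implied constant depends only on K and M. -/

import Mathlib

/-!
Setting: `K` is a number field, Galois over `ℚ`, with ring of integers `𝓞 K`.
We formalize the objects from Smith, "A generalization of the
Barban-Davenport-Halberstam Theorem to number fields".
-/

open NumberField Ideal
open scoped Classical BigOperators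

noncomputable section

/-- `𝔞` is a (positive) power of a nonzero prime ideal of `𝓞 K`. -/
def IsPrimeIdealPower {K : Type*} [Field K] [NumberField K] (𝔞 : Ideal (𝓞 K)) : Prop :=
  ∃ (𝔭 : Ideal (𝓞 K)) (m : ℕ), 𝔭.IsPrime ∧ 𝔭 ≠ ⊥ ∧ 1 ≤ m ∧ 𝔞 = 𝔭 ^ m

/-- The von Mangoldt function on ideals of `𝓞 K`: `Λ_K(𝔭^m) = log N𝔭`, and `0` otherwise.
(For `𝔞 = 𝔭^m` with `𝔭` prime, the radical of `𝔞` is `𝔭`.) -/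
def LambdaK (K : Type*) [Field K] [NumberField K] (𝔞 : Ideal (𝓞 K)) : ℝ :=
  if IsPrimeIdealPower 𝔞 then Real.log (absNorm 𝔞.radical) else 0

/-- `ψ_K(x; q, a) = ∑_{N𝔭^m ≤ x, N𝔭^m ≡ a (mod q)} log N𝔭`. -/
def psiK (K : Type*) [Field K] [NumberField K] (x : ℝ) (q : ℕ) (a : ZMod q) : ℝ :=
  ∑' 𝔞 : Ideal (𝓞 K),
    if (absNorm 𝔞 : ℝ) ≤ x ∧ ((absNorm 𝔞 : ZMod q) = a) then LambdaK K 𝔞 else 0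

/-- `G_q`: the image of `Gal(K(ζ_q)/K)` in `(ℤ/qℤ)ˣ` under restriction to `ℚ(ζ_q)` followed
by the canonical isomorphism `Gal(ℚ(ζ_q)/ℚ) ≅ (ℤ/qℤ)ˣ`; concretely, the range of the map
sending `σ ∈ Gal(K(ζ_q)/K)` to the exponent `a ∈ (ℤ/qℤ)ˣ` with `σ(ζ_q) = ζ_q^a`. -/
def Gq (K : Type*) [Field K] [NumberField K] (q : ℕ) : Subgroup (ZMod q)ˣ :=
  if h : 0 < q then
    haveI : NeZero q := ⟨h.ne'⟩
    haveI : NeZero (((⟨q, h⟩ : ℕ+) : ℕ) : K) := ⟨Nat.cast_ne_zero.mpr h.ne'⟩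
    ((IsCyclotomicExtension.zeta_spec (⟨q, h⟩ : ℕ+) K
        (CyclotomicField (⟨q, h⟩ : ℕ+) K)).autToPow K).range
  else ⊥

/-- `φ_K(q) = |G_q|`. -/
def phiK (K : Type*) [Field K] [NumberField K] (q : ℕ) : ℕ :=
  Nat.card (Gq K q)

/-- `ψ_K(x, χ∘N) = ∑_{N𝔞 ≤ x} χ(N𝔞) Λ_K(𝔞)`. -/
def psiKChi (K : Type*) [Field K] [NumberField K] (x : ℝ) {q : ℕ}
    (χ : DirichletCharacter ℂ q) : ℂ :=
  ∑' 𝔞 : Ideal (𝓞 K),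
    if (absNorm 𝔞 : ℝ) ≤ x then χ (absNorm 𝔞 : ZMod q) * (LambdaK K 𝔞 : ℂ) else 0

/-- `ψ'_K(x, χ∘N)`: equals `ψ_K(x, χ∘N) − x` when `χ` is trivial on `G_q`,
and `ψ_K(x, χ∘N)` otherwise. -/
def psiKChi' (K : Type*) [Field K] [NumberField K] (x : ℝ) {q : ℕ}
    (χ : DirichletCharacter ℂ q) : ℂ :=
  if ∀ a ∈ Gq K q, χ (a : ZMod q) = 1 then psiKChi K x χ - x else psiKChi K x χ

/-- The common residue degree `f(K/ℚ; p)` of the primes of `K` above `p`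
(well-defined when `K/ℚ` is Galois): any prime `𝔭` above `p` has `N𝔭 = p^f`. -/
def resDeg (K : Type*) [Field K] [NumberField K] (p : ℕ) : ℕ :=
  if h : ∃ 𝔭 : Ideal (𝓞 K), 𝔭.IsPrime ∧ 𝔭 ≠ ⊥ ∧ (p : 𝓞 K) ∈ 𝔭 then
    (absNorm h.choose).factorization p
  else 0

/-- `D_K(n)`: the number of prime ideal powers `𝔭^m` of `𝓞 K` with `N𝔭^m = n`. -/
def DK (K : Type*) [Field K] [NumberField K] (n : ℕ) : ℕ :=
  Nat.card {𝔞 : Ideal (𝓞 K) // IsPrimeIdealPower 𝔞 ∧ absNorm 𝔞 = n}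

/-- `Λ_K^*(n) = f(K/ℚ; p) · log p` if `n = p^k` is a prime power, and `0` otherwise. -/
def LambdaStarK (K : Type*) [Field K] [NumberField K] (n : ℕ) : ℝ :=
  if IsPrimePow n then (resDeg K n.minFac : ℝ) * Real.log n.minFac else 0

end

/-!
Split `|ψ'_K|²` into `|ψ_K|²` and the square of the correction `x`.

Grouping ideals by norm makes `ψ_K(x, χ∘N)` a sum over integers `n ≤ x` whose coefficients are at
most `[K : ℚ] Λ(n)`, because the distinct primes above `p` have norms multiplying to at most
`p ^ [K : ℚ]`. The multiplicative large sieve then bounds the mean square over moduli up to `U` by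
`O((x + U²) x log x)`, and summation by parts against the weight `log(2Q/q) / q` turns this into
`O(x Q log x)` on `q > R` as soon as `x log x ≤ R Q`. The large sieve itself comes by duality from
the near orthogonality of the vectors `(e(nu))ₙ` as `u` runs over well-spaced points, such as the
Farey fractions, and Gauss sums pass from additive to multiplicative characters.

The correction occurs only at moduli `q` carrying a primitive character trivial on `G_q`, and there
are at most `[K : ℚ]` of these: lifted to a common modulus `n`, such characters are distinct
characters of `(ℤ/n)ˣ / G_n`, whose order is `[K ∩ ℚ(ζ_n) : ℚ]`.
-/

section QuasiOrthogonality

variable {ι κ 𝕜 : Type*} [RCLike 𝕜] {S : Finset κ} {T : Finset ι} {C : ℝ} {y : ι → κ → 𝕜}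

open ComplexConjugate

lemma sum_sum_mul_mul_le_of_symm {k : ι → ι → ℝ} (hk : ∀ r s, 0 ≤ k r s)
    (hsymm : ∀ r s, k r s = k s r) (hC : ∀ r ∈ T, ∑ s ∈ T, k r s ≤ C) (b : ι → ℝ) :
    ∑ r ∈ T, ∑ s ∈ T, b r * b s * k r s ≤ C * ∑ r ∈ T, b r ^ 2 := by
  have hrow : ∑ r ∈ T, ∑ s ∈ T, b r ^ 2 * k r s ≤ C * ∑ r ∈ T, b r ^ 2 := by
    rw [Finset.mul_sum]
    refine Finset.sum_le_sum fun r hr ↦ ?_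
    rw [← Finset.mul_sum, mul_comm C]
    exact mul_le_mul_of_nonneg_left (hC r hr) (sq_nonneg _)
  have hcol : ∑ r ∈ T, ∑ s ∈ T, b s ^ 2 * k r s = ∑ r ∈ T, ∑ s ∈ T, b r ^ 2 * k r s := by
    rw [Finset.sum_comm]
    simp only [hsymm]
  have hamgm : ∑ r ∈ T, ∑ s ∈ T, b r * b s * k r s ≤
      ∑ r ∈ T, ∑ s ∈ T, (b r ^ 2 * k r s + b s ^ 2 * k r s) / 2 :=
    Finset.sum_le_sum fun r _ ↦ Finset.sum_le_sum fun s _ ↦ by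
      nlinarith [mul_nonneg (sq_nonneg (b r - b s)) (hk r s)]
  simp only [← Finset.sum_div, Finset.sum_add_distrib, hcol] at hamgm
  linarith

lemma norm_sum_mul_conj_comm (u v : κ → 𝕜) :
    ‖∑ k ∈ S, u k * conj (v k)‖ = ‖∑ k ∈ S, v k * conj (u k)‖ := by
  rw [← RCLike.norm_conj, map_sum]
  simp only [map_mul, RCLike.conj_conj, mul_comm]

lemma sum_norm_sum_sq_eq (c : ι → 𝕜) :
    ((∑ k ∈ S, ‖∑ r ∈ T, c r * y r k‖ ^ 2 : ℝ) : 𝕜) =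
      ∑ r ∈ T, ∑ s ∈ T, c r * conj (c s) * ∑ k ∈ S, y r k * conj (y s k) := by
  push_cast
  simp only [← RCLike.mul_conj, map_sum, map_mul, Finset.sum_mul_sum]
  simp only [Finset.mul_sum]
  rw [Finset.sum_comm]
  refine Finset.sum_congr rfl fun r _ ↦ ?_
  rw [Finset.sum_comm]
  exact Finset.sum_congr rfl fun s _ ↦ Finset.sum_congr rfl fun k _ ↦ mul_mul_mul_comm ..

lemma sum_norm_sum_sq_le_of_quasiorthogonal
    (hC : ∀ r ∈ T, ∑ s ∈ T, ‖∑ k ∈ S, y r k * conj (y s k)‖ ≤ C) (c : ι → 𝕜) :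
    ∑ k ∈ S, ‖∑ r ∈ T, c r * y r k‖ ^ 2 ≤ C * ∑ r ∈ T, ‖c r‖ ^ 2 := by
  have hgram := congrArg norm (sum_norm_sum_sq_eq (S := S) (T := T) (y := y) c)
  rw [RCLike.norm_of_nonneg (by positivity)] at hgram
  calc ∑ k ∈ S, ‖∑ r ∈ T, c r * y r k‖ ^ 2
      ≤ ∑ r ∈ T, ∑ s ∈ T, ‖c r‖ * ‖c s‖ * ‖∑ k ∈ S, y r k * conj (y s k)‖ := by
        rw [hgram]
        refine (norm_sum_le _ _).trans (Finset.sum_le_sum fun r _ ↦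
          (norm_sum_le _ _).trans_eq (Finset.sum_congr rfl fun s _ ↦ ?_))
        simp only [norm_mul, RCLike.norm_conj]
    _ ≤ C * ∑ r ∈ T, ‖c r‖ ^ 2 :=
        sum_sum_mul_mul_le_of_symm (fun _ _ ↦ norm_nonneg _)
          (fun r s ↦ norm_sum_mul_conj_comm (y r) (y s)) hC _

lemma sum_norm_sum_mul_sq_le_of_dual (hC : 0 ≤ C)
    (hdual : ∀ c : ι → 𝕜, ∑ k ∈ S, ‖∑ r ∈ T, c r * y r k‖ ^ 2 ≤ C * ∑ r ∈ T, ‖c r‖ ^ 2)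
    (x : κ → 𝕜) :
    ∑ r ∈ T, ‖∑ k ∈ S, x k * y r k‖ ^ 2 ≤ C * ∑ k ∈ S, ‖x k‖ ^ 2 := by
  set z : ι → 𝕜 := fun r ↦ ∑ k ∈ S, x k * y r k
  set w : κ → 𝕜 := fun k ↦ ∑ r ∈ T, conj (z r) * y r k
  set B := ∑ r ∈ T, ‖z r‖ ^ 2
  have hB : 0 ≤ B := by positivity
  have hpairing : (B : 𝕜) = ∑ k ∈ S, x k * w k := by
    simp only [B, w, RCLike.ofReal_sum, RCLike.ofReal_pow, ← RCLike.conj_mul, Finset.mul_sum]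
    rw [Finset.sum_comm]
    refine Finset.sum_congr rfl fun r _ ↦ ?_
    simp only [z, Finset.mul_sum, mul_left_comm]
  have hB_le : B ≤ ∑ k ∈ S, ‖x k‖ * ‖w k‖ := by
    rw [← RCLike.norm_of_nonneg (K := 𝕜) hB, hpairing]
    simpa only [norm_mul] using norm_sum_le S fun k ↦ x k * w k
  have hsq : B * B ≤ B * (C * ∑ k ∈ S, ‖x k‖ ^ 2) := by
    calc B * B ≤ (∑ k ∈ S, ‖x k‖ * ‖w k‖) ^ 2 := by rw [← sq]; gcongr
      _ ≤ (∑ k ∈ S, ‖x k‖ ^ 2) * ∑ k ∈ S, ‖w k‖ ^ 2 := Finset.sum_mul_sq_le_sq_mul_sq ..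
      _ ≤ (∑ k ∈ S, ‖x k‖ ^ 2) * (C * B) := by
          gcongr
          simpa only [RCLike.norm_conj] using hdual fun r ↦ conj (z r)
      _ = B * (C * ∑ k ∈ S, ‖x k‖ ^ 2) := by ring
  rcases hB.eq_or_lt with hzero | hpos
  · rw [← hzero]; positivity
  · exact le_of_mul_le_mul_left hsq hpos

lemma sum_norm_sum_mul_sq_le_of_quasiorthogonal (hC₀ : 0 ≤ C)
    (hC : ∀ r ∈ T, ∑ s ∈ T, ‖∑ k ∈ S, y r k * conj (y s k)‖ ≤ C)
    {S' : Finset κ} (hS' : S' ⊆ S) (x : κ → 𝕜) :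
    ∑ r ∈ T, ‖∑ k ∈ S', x k * y r k‖ ^ 2 ≤ C * ∑ k ∈ S', ‖x k‖ ^ 2 :=
  sum_norm_sum_mul_sq_le_of_dual hC₀ (fun c ↦
    (Finset.sum_le_sum_of_subset_of_nonneg hS' fun _ _ _ ↦ by positivity).trans
      (sum_norm_sum_sq_le_of_quasiorthogonal hC c)) x

end QuasiOrthogonality

section AdditiveLargeSieve

open ComplexConjugate

lemma exists_coe_eq_and_abs_eq_norm (u : UnitAddCircle) :
    ∃ t : ℝ, (t : UnitAddCircle) = u ∧ |t| = ‖u‖ := by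
  obtain ⟨s, rfl⟩ := QuotientAddGroup.mk_surjective u
  refine ⟨s - round s, ?_, UnitAddCircle.norm_eq.symm⟩
  rw [AddCircle.coe_sub, sub_eq_self, AddCircle.coe_eq_zero_iff]
  exact ⟨round s, by rw [zsmul_one]⟩

lemma norm_fourier_apply (n : ℤ) (u : UnitAddCircle) : ‖fourier n u‖ = 1 :=
  Circle.norm_coe _

lemma fourier_natCast_eq_pow (k : ℕ) (u : UnitAddCircle) : fourier k u = fourier 1 u ^ k := by
  simp only [fourier_apply, one_zsmul, natCast_zsmul, AddCircle.toCircle_nsmul, Circle.coe_pow]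

lemma fourier_sub (m n : ℤ) (u : UnitAddCircle) :
    fourier (m - n) u = fourier m u * conj (fourier n u) := by
  rw [sub_eq_add_neg, fourier_add, fourier_neg]

lemma fourier_apply_sub (n : ℤ) (u v : UnitAddCircle) :
    fourier n (u - v) = fourier n u * conj (fourier n v) := by
  rw [fourier_apply, smul_sub, sub_eq_add_neg, AddCircle.toCircle_add, Circle.coe_mul,
    fourier_neg', ← fourier_apply]

lemma four_mul_norm_le_norm_fourier_one_sub_one (u : UnitAddCircle) :
    4 * ‖u‖ ≤ ‖fourier 1 u - 1‖ := by
  obtain ⟨t, rfl, ht⟩ := exists_coe_eq_and_abs_eq_norm u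
  have hchord : ‖fourier 1 (t : UnitAddCircle) - 1‖ = 2 * |Real.sin (Real.pi * t)| := by
    have := Complex.norm_exp_I_mul_ofReal_sub_one (2 * Real.pi * t)
    rw [norm_mul, Real.norm_ofNat, Real.norm_eq_abs, mul_assoc 2,
      mul_div_cancel_left₀ _ two_ne_zero] at this
    rw [← this, fourier_coe_apply]
    push_cast
    congr 3
    ring
  have hhalf : |t| ≤ 1 / 2 := by
    simpa only [ht, abs_one] using AddCircle.norm_le_half_period (1 : ℝ) one_ne_zero
  have hpi : |Real.pi * t| = Real.pi * |t| := by rw [abs_mul, abs_of_pos Real.pi_pos]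
  have hsin := Real.mul_abs_le_abs_sin (x := Real.pi * t) (by rw [hpi]; nlinarith [Real.pi_pos])
  rw [hpi, ← mul_assoc, div_mul_cancel₀ _ Real.pi_ne_zero] at hsin
  rw [hchord, ← ht]
  linarith

lemma norm_sum_fourier_mul_le (m : ℕ) (u : UnitAddCircle) :
    ‖∑ k ∈ Finset.range m, fourier k u‖ * (2 * ‖u‖) ≤ 1 := by
  have hgeom : (∑ k ∈ Finset.range m, fourier k u) * (fourier 1 u - 1) = fourier m u - 1 := by
    simp only [fourier_natCast_eq_pow, geom_sum_mul]
  have hle : ‖fourier m u - 1‖ ≤ 2 := (norm_sub_le _ _).trans_eq <| by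
    rw [norm_fourier_apply, norm_one, one_add_one_eq_two]
  rw [← hgeom, norm_mul] at hle
  have := mul_le_mul_of_nonneg_left (four_mul_norm_le_norm_fourier_one_sub_one u)
    (norm_nonneg (∑ k ∈ Finset.range m, fourier k u))
  linarith

lemma norm_sum_fourier_le (m : ℕ) (u : UnitAddCircle) :
    ‖∑ k ∈ Finset.range m, fourier k u‖ ≤ m := by
  refine (norm_sum_le _ _).trans_eq ?_
  simp only [norm_fourier_apply, Finset.sum_const, Finset.card_range, nsmul_eq_mul, mul_one]

lemma sq_floor_le (y : ℝ) : (⌊y⌋ : ℝ) ^ 2 ≤ 2 * y ^ 2 + 2 := by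
  nlinarith [Int.floor_le y, Int.lt_floor_add_one y, sq_nonneg (2 * y - ⌊y⌋)]

lemma sq_norm_sum_fourier_le (L : ℕ) {t : ℝ} (ht : |t| = ‖(t : UnitAddCircle)‖) :
    ‖∑ k ∈ Finset.range (2 * L), fourier k (t : UnitAddCircle)‖ ^ 2 ≤
      13 * L ^ 2 * (1 / (1 + (⌊L * t⌋ : ℝ) ^ 2)) := by
  have htrivial := norm_sum_fourier_le (2 * L) (t : UnitAddCircle)
  have hgeom := norm_sum_fourier_mul_le (2 * L) (t : UnitAddCircle)
  rw [← ht] at hgeom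
  set D := ‖∑ k ∈ Finset.range (2 * L), fourier k (t : UnitAddCircle)‖
  have htrivial_sq : D ^ 2 ≤ (2 * L) ^ 2 := by push_cast at htrivial; gcongr
  have hgeom_sq : (D * (2 * |t|)) ^ 2 ≤ 1 := pow_le_one₀ (by positivity) hgeom
  rw [mul_one_div, le_div_iff₀ (by positivity)]
  calc D ^ 2 * (1 + (⌊L * t⌋ : ℝ) ^ 2) ≤ D ^ 2 * (1 + (2 * (L * t) ^ 2 + 2)) := by
        gcongr; exact sq_floor_le _
    _ = 3 * D ^ 2 + L ^ 2 * (D * (2 * |t|)) ^ 2 / 2 := by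
        rw [← sq_abs (L * t), abs_mul, Nat.abs_cast]
        ring
    _ ≤ 3 * (2 * L) ^ 2 + L ^ 2 * 1 / 2 := by gcongr
    _ ≤ 13 * L ^ 2 := by nlinarith [sq_nonneg (L : ℝ)]

lemma summable_one_div_one_add_int_sq : Summable fun k : ℤ ↦ 1 / (1 + (k : ℝ) ^ 2) := by
  refine .of_norm_bounded_eventually (Real.summable_one_div_int_pow.mpr one_lt_two) ?_
  filter_upwards [(Set.finite_singleton (0 : ℤ)).compl_mem_cofinite] with k hk
  have : (k : ℝ) ≠ 0 := Int.cast_ne_zero.mpr hk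
  rw [Real.norm_of_nonneg (by positivity)]
  gcongr
  exact le_add_of_nonneg_left zero_le_one

/-- The absolute constant of the additive large sieve inequality
`sum_norm_sum_mul_fourier_sq_le`. -/
noncomputable def largeSieveConst : ℝ := 13 * ∑' k : ℤ, 1 / (1 + (k : ℝ) ^ 2)

lemma largeSieveConst_pos : 0 < largeSieveConst :=
  mul_pos (by norm_num) <| summable_one_div_one_add_int_sq.tsum_pos (fun _ ↦ by positivity) 0
    (by norm_num)

variable {T : Finset UnitAddCircle} {L : ℕ}

lemma sum_sq_norm_sum_fourier_sub_le
    (hT : (T : Set UnitAddCircle).Pairwise fun u v ↦ 1 ≤ L * ‖u - v‖) (u : UnitAddCircle) :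
    ∑ v ∈ T, ‖∑ k ∈ Finset.range (2 * L), fourier k (u - v)‖ ^ 2 ≤ largeSieveConst * L ^ 2 := by
  choose lift coe_lift abs_lift using exists_coe_eq_and_abs_eq_norm
  let κ : UnitAddCircle → ℤ := fun v ↦ ⌊L * lift (u - v)⌋
  have hκ : Set.InjOn κ T := by
    intro v hv w hw hvw
    by_contra hne
    have hclose := Int.abs_sub_lt_one_of_floor_eq_floor hvw
    rw [← mul_sub, abs_mul, Nat.abs_cast] at hclose
    have hnorm : ‖v - w‖ ≤ |lift (u - v) - lift (u - w)| := by
      rw [norm_sub_rev, ← sub_sub_sub_cancel_left v w u]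
      nth_rw 1 [← coe_lift (u - v), ← coe_lift (u - w)]
      exact QuotientAddGroup.norm_mk_le_norm
    exact absurd (hT hv hw hne) (not_le.mpr (lt_of_le_of_lt (by gcongr) hclose))
  calc ∑ v ∈ T, ‖∑ k ∈ Finset.range (2 * L), fourier k (u - v)‖ ^ 2
      ≤ ∑ v ∈ T, 13 * (L : ℝ) ^ 2 * (1 / (1 + (κ v : ℝ) ^ 2)) :=
        Finset.sum_le_sum fun v _ ↦ by
          have := sq_norm_sum_fourier_le L (t := lift (u - v)) (by rw [abs_lift, coe_lift])
          rwa [coe_lift] at this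
    _ = 13 * (L : ℝ) ^ 2 * ∑ k ∈ T.image κ, 1 / (1 + (k : ℝ) ^ 2) := by
        rw [← Finset.mul_sum, Finset.sum_image hκ]
    _ ≤ 13 * (L : ℝ) ^ 2 * ∑' k : ℤ, 1 / (1 + (k : ℝ) ^ 2) := by
        gcongr
        exact summable_one_div_one_add_int_sq.sum_le_tsum _ fun _ _ ↦ by positivity
    _ = largeSieveConst * L ^ 2 := by rw [largeSieveConst]; ring

lemma sum_norm_sum_mul_fourier_sq_le
    (hT : (T : Set UnitAddCircle).Pairwise fun u v ↦ 1 ≤ L * ‖u - v‖) {N : ℕ} (hN : N ≤ L)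
    (a : ℕ → ℂ) :
    ∑ u ∈ T, ‖∑ n ∈ Finset.range N, a n * fourier n u‖ ^ 2 ≤
      largeSieveConst * L * ∑ n ∈ Finset.range N, ‖a n‖ ^ 2 := by
  rcases L.eq_zero_or_pos with rfl | hL
  · simp [Nat.le_zero.mp hN]
  -- Indexing by pairs `p` with `fourier (p.1 - p.2)` weights the frequency `n` by `(2L - |n|)⁺`,
  -- which is at least `L` for `0 ≤ n < L` and makes the Gram matrix the nonnegative Fejér kernel.
  have hgram (u v : UnitAddCircle) :
      ‖∑ p ∈ Finset.range (2 * L) ×ˢ Finset.range (2 * L),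
        fourier ((p.1 : ℤ) - p.2) u * conj (fourier ((p.1 : ℤ) - p.2) v)‖ =
      ‖∑ k ∈ Finset.range (2 * L), fourier k (u - v)‖ ^ 2 := by
    simp only [← fourier_apply_sub]
    simp only [fourier_sub, Finset.sum_product]
    rw [← Finset.sum_mul_sum, norm_mul, ← map_sum, RCLike.norm_conj, sq]
  have hdiag : (Finset.range N ×ˢ Finset.range L).image (fun p ↦ (p.1 + p.2, p.2)) ⊆
      Finset.range (2 * L) ×ˢ Finset.range (2 * L) := by
    intro p hp
    simp only [Finset.mem_image, Finset.mem_product, Finset.mem_range] at hp ⊢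
    grind
  have hsieve := sum_norm_sum_mul_sq_le_of_quasiorthogonal (T := T)
    (y := fun u p ↦ fourier ((p.1 : ℤ) - p.2) u)
    (mul_nonneg largeSieveConst_pos.le (sq_nonneg (L : ℝ)))
    (fun u _ ↦ by simpa only [hgram] using sum_sq_norm_sum_fourier_sub_le hT u) hdiag
    (fun p ↦ a (p.1 - p.2))
  have hinj : Set.InjOn (fun p : ℕ × ℕ ↦ (p.1 + p.2, p.2))
      (Finset.range N ×ˢ Finset.range L : Finset (ℕ × ℕ)) := by
    rintro ⟨i, j⟩ - ⟨i', j'⟩ - h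
    simp only [Prod.mk.injEq] at h ⊢
    lia
  simp only [Finset.sum_image hinj, Finset.sum_product, add_tsub_cancel_right, Nat.cast_add,
    Finset.sum_const, Finset.card_range, nsmul_eq_mul, ← Finset.mul_sum,
    norm_mul, mul_pow, Complex.norm_natCast] at hsieve
  have hL' : (0 : ℝ) < (L : ℝ) ^ 2 := by positivity
  refine le_of_mul_le_mul_left (hsieve.trans_eq ?_) hL'
  ring

end AdditiveLargeSieve

section FareyPoints

lemma finite_setOf_addOrderOf_mem_Icc (Q : ℕ) :
    {u : UnitAddCircle | addOrderOf u ∈ Finset.Icc 1 Q}.Finite := by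
  have hunion : {u : UnitAddCircle | addOrderOf u ∈ Finset.Icc 1 Q} =
      ⋃ q ∈ Finset.Icc 1 Q, {u | addOrderOf u = q} := by ext; simp
  rw [hunion]
  exact (Finset.finite_toSet _).biUnion fun q hq ↦
    AddCircle.finite_setOfPred_addOrderOf_eq 1 (Finset.mem_Icc.mp hq).1

/-- The Farey fractions `a / q` with `gcd (a, q) = 1` and `1 ≤ q ≤ Q`, encoded as the points of
`ℝ / ℤ` whose order `q` is finite and at most `Q`. -/
noncomputable def fareyPoints (Q : ℕ) : Finset UnitAddCircle :=
  (finite_setOf_addOrderOf_mem_Icc Q).toFinset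

lemma mem_fareyPoints {Q : ℕ} {u : UnitAddCircle} :
    u ∈ fareyPoints Q ↔ addOrderOf u ∈ Finset.Icc 1 Q :=
  Set.Finite.mem_toFinset _

lemma one_le_mul_norm_sub_of_mem_fareyPoints {Q L : ℕ} (hL : Q ^ 2 ≤ L) {u v : UnitAddCircle}
    (hu : u ∈ fareyPoints Q) (hv : v ∈ fareyPoints Q) (huv : u ≠ v) : 1 ≤ L * ‖u - v‖ := by
  obtain ⟨hu_pos, hu_le⟩ := Finset.mem_Icc.mp (mem_fareyPoints.mp hu)
  obtain ⟨hv_pos, hv_le⟩ := Finset.mem_Icc.mp (mem_fareyPoints.mp hv)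
  have hpos : 0 < addOrderOf u * addOrderOf v := Nat.mul_pos hu_pos hv_pos
  have hdvd : addOrderOf (u - v) ∣ addOrderOf u * addOrderOf v := by
    refine addOrderOf_dvd_of_nsmul_eq_zero ?_
    rw [nsmul_sub, mul_nsmul, addOrderOf_nsmul_eq_zero, nsmul_zero, mul_nsmul',
      addOrderOf_nsmul_eq_zero, nsmul_zero, sub_zero]
  have hle : addOrderOf (u - v) ≤ L := calc
    addOrderOf (u - v) ≤ addOrderOf u * addOrderOf v := Nat.le_of_dvd hpos hdvd
    _ ≤ Q * Q := Nat.mul_le_mul hu_le hv_le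
    _ ≤ L := sq Q ▸ hL
  have hfin : IsOfFinAddOrder (u - v) := addOrderOf_pos_iff.mp (Nat.pos_of_dvd_of_pos hdvd hpos)
  calc (1 : ℝ) ≤ addOrderOf (u - v) • ‖u - v‖ :=
        AddCircle.le_add_order_smul_norm_of_isOfFinAddOrder hfin (sub_ne_zero.mpr huv)
    _ ≤ L * ‖u - v‖ := by rw [nsmul_eq_mul]; gcongr

lemma sum_fareyPoints_sq_le (N Q : ℕ) (a : ℕ → ℂ) :
    ∑ u ∈ fareyPoints Q, ‖∑ n ∈ Finset.range N, a n * fourier n u‖ ^ 2 ≤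
      largeSieveConst * (N + Q ^ 2) * ∑ n ∈ Finset.range N, ‖a n‖ ^ 2 := by
  have := sum_norm_sum_mul_fourier_sq_le (L := N + Q ^ 2) (T := fareyPoints Q)
    (fun u hu v hv ↦ one_le_mul_norm_sub_of_mem_fareyPoints (Nat.le_add_left _ _) hu hv)
    (Nat.le_add_right _ _) a
  exact_mod_cast this

variable {q : ℕ} [NeZero q]

lemma addOrderOf_toAddCircle_unit (a : (ZMod q)ˣ) :
    addOrderOf (ZMod.toAddCircle (a : ZMod q)) = q := by
  rw [addOrderOf_injective _ (ZMod.toAddCircle_injective q)]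
  refine (addOrderOf_eq_addOrderOf_iff.mpr fun n ↦ ?_).trans (ZMod.addOrderOf_one q)
  rw [nsmul_eq_mul, nsmul_eq_mul, mul_one, Units.mul_left_eq_zero]

lemma stdAddChar_natCast_mul (n : ℕ) (a : ZMod q) :
    ZMod.stdAddChar ((n : ZMod q) * a) = fourier n (ZMod.toAddCircle a) := by
  rw [← nsmul_eq_mul, fourier_apply, natCast_zsmul, ← map_nsmul]
  rfl

lemma sum_units_toAddCircle_le {Q : ℕ} (hq : q ≤ Q) {f : UnitAddCircle → ℝ} (hf : ∀ u, 0 ≤ f u) :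
    ∑ a : (ZMod q)ˣ, f (ZMod.toAddCircle (a : ZMod q)) ≤
      ∑ u ∈ fareyPoints Q with addOrderOf u = q, f u := by
  have hinj : Function.Injective fun a : (ZMod q)ˣ ↦ ZMod.toAddCircle (a : ZMod q) :=
    (ZMod.toAddCircle_injective q).comp Units.val_injective
  rw [← Finset.sum_image (g := fun a : (ZMod q)ˣ ↦ ZMod.toAddCircle (a : ZMod q)) hinj.injOn]
  refine Finset.sum_le_sum_of_subset_of_nonneg (Finset.image_subset_iff.mpr fun a _ ↦ ?_)
    fun u _ _ ↦ hf u
  rw [Finset.mem_filter, mem_fareyPoints, addOrderOf_toAddCircle_unit, Finset.mem_Icc]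
  exact ⟨⟨NeZero.one_le, hq⟩, rfl⟩

end FareyPoints

section MultiplicativeLargeSieve

open ComplexConjugate ZMod

lemma isPrimitive_inv {R : Type*} [CommRing R] {n : ℕ} {χ : DirichletCharacter R n}
    (hχ : χ.IsPrimitive) : χ⁻¹.IsPrimitive := by
  rwa [DirichletCharacter.isPrimitive_def, DirichletCharacter.conductor_inv]

lemma finsum_isPrimitive_eq_sum {M : Type*} [AddCommMonoid M] {q : ℕ}
    (f : DirichletCharacter ℂ q → M) :
    ∑ᶠ χ ∈ {χ : DirichletCharacter ℂ q | χ.IsPrimitive}, f χ = ∑ χ with χ.IsPrimitive, f χ := by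
  rw [← finsum_mem_coe_finset, Finset.coe_filter_univ]

variable {q : ℕ} [NeZero q]

lemma sq_norm_gaussSum_of_isPrimitive {χ : DirichletCharacter ℂ q} (hχ : χ.IsPrimitive) :
    ‖gaussSum χ stdAddChar‖ ^ 2 = q := by
  have hinversion : 𝓕 (𝓕 χ) (-1) = gaussSum χ stdAddChar * gaussSum χ⁻¹ stdAddChar⁻¹ := by
    rw [dft_apply, gaussSum.eq_def χ⁻¹, Finset.mul_sum]
    refine Fintype.sum_equiv (Equiv.neg _) _ _ fun a ↦ ?_
    rw [hχ.fourierTransform_eq_inv_mul_gaussSum, mul_neg_one, neg_neg, smul_eq_mul,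
      Equiv.neg_apply, AddChar.inv_apply, neg_neg]
    ring
  simp only [dft_dft, neg_neg, map_one, smul_eq_mul, mul_one, ← star_gaussSum_eq] at hinversion
  have := Complex.mul_conj' (gaussSum χ stdAddChar)
  exact_mod_cast this.symm.trans hinversion.symm

lemma sum_mul_eq_sum_units (χ : DirichletCharacter ℂ q) (f : ZMod q → ℂ) :
    ∑ a, f a * χ a = ∑ a : (ZMod q)ˣ, f a * χ a :=
  (Fintype.sum_of_injective _ Units.val_injective _ _
    (fun a ha ↦ by rw [χ.map_nonunit fun h ↦ ha h, mul_zero]) fun _ ↦ rfl).symm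

lemma gaussSum_mul_sum_eq {χ : DirichletCharacter ℂ q} (hχ : χ.IsPrimitive) (N : ℕ) (c : ℕ → ℂ) :
    gaussSum χ⁻¹ stdAddChar * ∑ n ∈ Finset.range N, c n * χ n =
      ∑ a : (ZMod q)ˣ, (∑ n ∈ Finset.range N, c n * fourier n (toAddCircle (a : ZMod q))) *
        χ⁻¹ a := by
  simp only [← stdAddChar_natCast_mul]
  rw [← sum_mul_eq_sum_units χ⁻¹ fun a ↦
    ∑ n ∈ Finset.range N, c n * stdAddChar ((n : ZMod q) * a)]
  simp only [Finset.mul_sum, Finset.sum_mul]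
  rw [Finset.sum_comm]
  refine Finset.sum_congr rfl fun n _ ↦ ?_
  have hshift := gaussSum_mulShift_of_isPrimitive stdAddChar (isPrimitive_inv hχ) (n : ZMod q)
  rw [inv_inv] at hshift
  rw [mul_left_comm, mul_comm (gaussSum _ _), ← hshift, gaussSum, Finset.mul_sum]
  refine Finset.sum_congr rfl fun a _ ↦ ?_
  rw [AddChar.mulShift_apply]
  ring

lemma sum_norm_sum_mul_inv_sq_le (S : (ZMod q)ˣ → ℂ) :
    ∑ χ : DirichletCharacter ℂ q, ‖∑ a : (ZMod q)ˣ, S a * χ⁻¹ a‖ ^ 2 ≤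
      q.totient * ∑ a, ‖S a‖ ^ 2 := by
  refine sum_norm_sum_sq_le_of_quasiorthogonal (fun a _ ↦ ?_) S
  have hgram (b : (ZMod q)ˣ) : ∑ χ : DirichletCharacter ℂ q, χ⁻¹ a * conj (χ⁻¹ b) =
      if (a : ZMod q) = b then (q.totient : ℂ) else 0 := by
    rw [← DirichletCharacter.sum_char_inv_mul_char_eq ℂ a.isUnit]
    refine Finset.sum_congr rfl fun χ _ ↦ ?_
    rw [MulChar.inv_apply, Ring.inverse_unit, inv_coe_unit, ← MulChar.star_apply',
      starRingEnd_apply, star_star]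
  simp [hgram, apply_ite, Units.val_inj]

lemma finsum_isPrimitive_norm_sum_mul_sq_le (N : ℕ) (c : ℕ → ℂ) :
    (q : ℝ) / q.totient * ∑ᶠ χ ∈ {χ : DirichletCharacter ℂ q | χ.IsPrimitive},
      ‖∑ n ∈ Finset.range N, c n * χ n‖ ^ 2 ≤
      ∑ a : (ZMod q)ˣ, ‖∑ n ∈ Finset.range N, c n * fourier n (toAddCircle (a : ZMod q))‖ ^ 2 := by
  have htotient : (0 : ℝ) < q.totient := Nat.cast_pos.mpr (Nat.totient_pos.mpr (NeZero.pos q))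
  rw [finsum_isPrimitive_eq_sum, div_mul_eq_mul_div, div_le_iff₀' htotient, Finset.mul_sum]
  refine (Finset.sum_le_sum_of_subset_of_nonneg (Finset.filter_subset _ _)
    fun _ _ _ ↦ by positivity).trans' (Finset.sum_le_sum fun χ hχ ↦ ?_) |>.trans
    (sum_norm_sum_mul_inv_sq_le _)
  have hprim := (Finset.mem_filter.mp hχ).2
  rw [← gaussSum_mul_sum_eq hprim, norm_mul, mul_pow,
    sq_norm_gaussSum_of_isPrimitive (isPrimitive_inv hprim)]

theorem multiplicative_large_sieve (N Q : ℕ) (c : ℕ → ℂ) :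
    ∑ q ∈ Finset.Icc 1 Q, (q : ℝ) / q.totient *
      ∑ᶠ χ ∈ {χ : DirichletCharacter ℂ q | χ.IsPrimitive},
        ‖∑ n ∈ Finset.range N, c n * χ n‖ ^ 2 ≤
      largeSieveConst * (N + Q ^ 2) * ∑ n ∈ Finset.range N, ‖c n‖ ^ 2 := by
  refine le_trans (Finset.sum_le_sum fun q hq ↦ ?_)
    ((Finset.sum_fiberwise_of_maps_to (fun u ↦ mem_fareyPoints.mp) _).trans_le
      (sum_fareyPoints_sq_le N Q c))
  obtain ⟨hq_pos, hq_le⟩ := Finset.mem_Icc.mp hq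
  have : NeZero q := ⟨Nat.one_le_iff_ne_zero.mp hq_pos⟩
  exact (finsum_isPrimitive_norm_sum_mul_sq_le N c).trans
    (sum_units_toAddCircle_le
      (f := fun u ↦ ‖∑ n ∈ Finset.range N, c n * fourier n u‖ ^ 2) hq_le fun _ ↦ sq_nonneg _)

end MultiplicativeLargeSieve

section IdealVonMangoldt

variable {K : Type*} [Field K] [NumberField K]

lemma IsPrimeIdealPower.isPrime_radical {𝔞 : Ideal (𝓞 K)} (h : IsPrimeIdealPower 𝔞) :
    𝔞.radical.IsPrime := by
  obtain ⟨𝔭, m, h𝔭, -, hm, rfl⟩ := h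
  rwa [radical_pow _ (Nat.one_le_iff_ne_zero.mp hm), h𝔭.radical]

lemma IsPrimeIdealPower.ne_bot {𝔞 : Ideal (𝓞 K)} (h : IsPrimeIdealPower 𝔞) : 𝔞 ≠ ⊥ := by
  obtain ⟨𝔭, m, -, h𝔭, -, rfl⟩ := h
  exact pow_ne_zero m h𝔭

lemma IsPrimeIdealPower.exists_eq_radical_pow {𝔞 : Ideal (𝓞 K)} (h : IsPrimeIdealPower 𝔞) :
    ∃ m, 𝔞 = 𝔞.radical ^ m := by
  obtain ⟨𝔭, m, h𝔭, -, hm, rfl⟩ := h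
  exact ⟨m, by rw [radical_pow _ (Nat.one_le_iff_ne_zero.mp hm), h𝔭.radical]⟩

lemma IsPrimeIdealPower.isPrimePow_absNorm {𝔞 : Ideal (𝓞 K)} (h : IsPrimeIdealPower 𝔞) :
    IsPrimePow (absNorm 𝔞) := by
  obtain ⟨𝔭, m, h𝔭, h0, hm, rfl⟩ := h
  have := h𝔭.isMaximal h0
  obtain ⟨p, f, hf, -, hp, hnorm⟩ := exists_prime_and_absNorm_eq_pow 𝔭
  rw [map_pow, hnorm, ← pow_mul]
  exact hp.isPrimePow.pow (mul_ne_zero hf.ne' (Nat.one_le_iff_ne_zero.mp hm))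

lemma IsPrimeIdealPower.eq_of_radical_eq {𝔞 𝔟 : Ideal (𝓞 K)} (h𝔞 : IsPrimeIdealPower 𝔞)
    (h𝔟 : IsPrimeIdealPower 𝔟) (hradical : 𝔞.radical = 𝔟.radical)
    (hnorm : absNorm 𝔞 = absNorm 𝔟) : 𝔞 = 𝔟 := by
  obtain ⟨k, hk⟩ := h𝔞.exists_eq_radical_pow
  obtain ⟨m, hm⟩ := h𝔟.exists_eq_radical_pow
  rw [← hradical] at hm
  have hone : absNorm 𝔞.radical ≠ 1 := absNorm_eq_one_iff.not.mpr h𝔞.isPrime_radical.ne_top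
  have hzero : absNorm 𝔞.radical ≠ 0 :=
    absNorm_eq_zero_iff.not.mpr (ne_bot_of_le_ne_bot h𝔞.ne_bot le_radical)
  rw [hk, hm, map_pow, map_pow] at hnorm
  rw [hk, hm, Nat.pow_right_injective (by lia) hnorm]

lemma sum_log_absNorm_le {p : ℕ} (hp : 0 < p) (s : Finset (Ideal (𝓞 K)))
    (hs : ∀ 𝔭 ∈ s, 𝔭.IsPrime ∧ 𝔭 ≠ ⊥ ∧ (p : 𝓞 K) ∈ 𝔭) :
    ∑ 𝔭 ∈ s, Real.log (absNorm 𝔭) ≤ Module.finrank ℚ K * Real.log p := by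
  have hdvd : ∏ 𝔭 ∈ s, 𝔭 ∣ span {(p : 𝓞 K)} :=
    Finset.prod_primes_dvd _ (fun 𝔭 h𝔭 ↦ prime_of_isPrime (hs 𝔭 h𝔭).2.1 (hs 𝔭 h𝔭).1)
      (fun 𝔭 h𝔭 ↦ dvd_span_singleton.mpr (hs 𝔭 h𝔭).2.2)
  have hnorm := absNorm_dvd_absNorm_of_le (le_of_dvd hdvd)
  rw [absNorm_span_natCast, map_prod, RingOfIntegers.rank] at hnorm
  have hpos (𝔭) (h𝔭 : 𝔭 ∈ s) : 0 < (absNorm 𝔭 : ℝ) :=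
    Nat.cast_pos.mpr (Nat.pos_of_ne_zero (absNorm_eq_zero_iff.not.mpr (hs 𝔭 h𝔭).2.1))
  rw [← Real.log_prod fun 𝔭 h𝔭 ↦ (hpos 𝔭 h𝔭).ne', ← Real.log_pow]
  exact Real.log_le_log (Finset.prod_pos hpos)
    (by exact_mod_cast Nat.le_of_dvd (pow_pos hp _) hnorm)

lemma LambdaK_nonneg (𝔞 : Ideal (𝓞 K)) : 0 ≤ LambdaK K 𝔞 := by
  unfold LambdaK
  split_ifs
  exacts [Real.log_natCast_nonneg _, le_rfl]

variable (K) in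
/-- The `n`-th coefficient `∑_{N𝔞 = n} Λ_K(𝔞)` of the Dirichlet series `-ζ_K' / ζ_K`, which
turns `ψ_K(x, χ ∘ N)` into a sum over integers. -/
noncomputable def normCoeff (n : ℕ) : ℝ :=
  ∑ 𝔞 ∈ (finite_setOfPred_absNorm_eq (S := 𝓞 K) n).toFinset, LambdaK K 𝔞

lemma normCoeff_nonneg (n : ℕ) : 0 ≤ normCoeff K n :=
  Finset.sum_nonneg fun 𝔞 _ ↦ LambdaK_nonneg 𝔞

lemma normCoeff_eq_zero {n : ℕ} (hn : ¬ IsPrimePow n) : normCoeff K n = 0 := by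
  refine Finset.sum_eq_zero fun 𝔞 h𝔞 ↦ if_neg fun hpow ↦ hn ?_
  rw [Set.Finite.mem_toFinset, Set.mem_ofPred_eq] at h𝔞
  exact h𝔞 ▸ hpow.isPrimePow_absNorm

lemma normCoeff_prime_pow_le {p : ℕ} (hp : 0 < p) (k : ℕ) :
    normCoeff K (p ^ k) ≤ Module.finrank ℚ K * Real.log p := by
  have hmem (𝔞 : Ideal (𝓞 K)) :
      𝔞 ∈ (finite_setOfPred_absNorm_eq (p ^ k)).toFinset.filter IsPrimeIdealPower ↔
        absNorm 𝔞 = p ^ k ∧ IsPrimeIdealPower 𝔞 := by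
    rw [Finset.mem_filter, Set.Finite.mem_toFinset, Set.mem_ofPred_eq]
  simp only [normCoeff, LambdaK]
  rw [← Finset.sum_filter,
    ← Finset.sum_image (f := fun 𝔭 : Ideal (𝓞 K) ↦ Real.log (absNorm 𝔭)) fun 𝔞 h𝔞 𝔟 h𝔟 h ↦ ?_]
  · refine sum_log_absNorm_le hp _ fun 𝔭 h𝔭 ↦ ?_
    obtain ⟨𝔞, h𝔞, rfl⟩ := Finset.mem_image.mp h𝔭
    obtain ⟨hnorm, hpow⟩ := (hmem 𝔞).mp h𝔞
    refine ⟨hpow.isPrime_radical, ne_bot_of_le_ne_bot hpow.ne_bot le_radical, k, ?_⟩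
    rw [← Nat.cast_pow, ← hnorm]
    exact absNorm_mem 𝔞
  · obtain ⟨h𝔞_norm, h𝔞_pow⟩ := (hmem 𝔞).mp h𝔞
    obtain ⟨h𝔟_norm, h𝔟_pow⟩ := (hmem 𝔟).mp h𝔟
    exact h𝔞_pow.eq_of_radical_eq h𝔟_pow h (h𝔞_norm.trans h𝔟_norm.symm)

lemma normCoeff_le (n : ℕ) :
    normCoeff K n ≤ Module.finrank ℚ K * ArithmeticFunction.vonMangoldt n := by
  by_cases hn : IsPrimePow n
  · rw [ArithmeticFunction.vonMangoldt_apply, if_pos hn]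
    have := normCoeff_prime_pow_le (K := K) n.minFac_pos (n.factorization n.minFac)
    rwa [hn.minFac_pow_factorization_eq] at this
  · rw [normCoeff_eq_zero hn, ArithmeticFunction.vonMangoldt_eq_zero_iff.mpr hn, mul_zero]

lemma psiKChi_eq_sum {x : ℝ} (hx : 0 ≤ x) {q : ℕ} (χ : DirichletCharacter ℂ q) :
    psiKChi K x χ = ∑ n ∈ Finset.range (⌊x⌋₊ + 1), (normCoeff K n : ℂ) * χ n := by
  have hrange (n : ℕ) : n ∈ Finset.range (⌊x⌋₊ + 1) ↔ (n : ℝ) ≤ x := by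
    rw [Finset.mem_range, Nat.lt_succ_iff, Nat.le_floor_iff hx]
  set F := (finite_setOfPred_absNorm_le (S := 𝓞 K) ⌊x⌋₊).toFinset
  have hF (𝔞 : Ideal (𝓞 K)) : 𝔞 ∈ F ↔ (absNorm 𝔞 : ℝ) ≤ x := by
    rw [Set.Finite.mem_toFinset, Set.mem_ofPred_eq, Nat.le_floor_iff hx]
  rw [psiKChi, tsum_eq_sum (s := F) (fun 𝔞 h𝔞 ↦ if_neg (mt (hF 𝔞).mpr h𝔞)),
    ← Finset.sum_fiberwise_of_maps_to fun 𝔞 h𝔞 ↦ (hrange _).mpr ((hF 𝔞).mp h𝔞)]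
  refine Finset.sum_congr rfl fun n hn ↦ ?_
  have hfiber : F.filter (fun 𝔞 ↦ absNorm 𝔞 = n) =
      (finite_setOfPred_absNorm_eq (S := 𝓞 K) n).toFinset := by
    ext 𝔞
    rw [Finset.mem_filter, hF, Set.Finite.mem_toFinset, Set.mem_ofPred_eq]
    exact and_iff_right_of_imp fun h ↦ h ▸ (hrange n).mp hn
  rw [hfiber, normCoeff, Complex.ofReal_sum, Finset.sum_mul]
  refine Finset.sum_congr rfl fun 𝔞 h𝔞 ↦ ?_
  rw [Set.Finite.mem_toFinset, Set.mem_ofPred_eq] at h𝔞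
  rw [h𝔞, if_pos ((hrange n).mp hn), mul_comm]

lemma sum_norm_normCoeff_sq_le {x : ℝ} (hx : 1 ≤ x) :
    ∑ n ∈ Finset.range (⌊x⌋₊ + 1), ‖(normCoeff K n : ℂ)‖ ^ 2 ≤
      (Module.finrank ℚ K) ^ 2 * (Real.log 4 + 4) * (x * Real.log x) := by
  have hx₀ : 0 ≤ x := zero_le_one.trans hx
  have hterm (n) (hn : n ∈ Finset.Ioc 0 ⌊x⌋₊) : ‖(normCoeff K n : ℂ)‖ ^ 2 ≤
      (Module.finrank ℚ K) ^ 2 * Real.log x * ArithmeticFunction.vonMangoldt n := by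
    obtain ⟨hn_pos, hn_le⟩ := Finset.mem_Ioc.mp hn
    have hlog : ArithmeticFunction.vonMangoldt n ≤ Real.log x :=
      ArithmeticFunction.vonMangoldt_le_log.trans
        (Real.log_le_log (Nat.cast_pos.mpr hn_pos) ((Nat.le_floor_iff hx₀).mp hn_le))
    rw [Complex.norm_real, Real.norm_of_nonneg (normCoeff_nonneg n)]
    calc normCoeff K n ^ 2 ≤ (Module.finrank ℚ K * ArithmeticFunction.vonMangoldt n) ^ 2 :=
          pow_le_pow_left₀ (normCoeff_nonneg n) (normCoeff_le n) 2
      _ = (Module.finrank ℚ K) ^ 2 * ArithmeticFunction.vonMangoldt n *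
          ArithmeticFunction.vonMangoldt n := by ring
      _ ≤ _ := by gcongr
  have hzero : normCoeff K 0 = 0 := normCoeff_eq_zero not_isPrimePow_zero
  have hrange : Finset.range (⌊x⌋₊ + 1) = insert 0 (Finset.Ioc 0 ⌊x⌋₊) := by
    ext n
    simp only [Finset.mem_range, Finset.mem_insert, Finset.mem_Ioc]
    lia
  rw [hrange, Finset.sum_insert (by simp), hzero, Complex.ofReal_zero, norm_zero,
    zero_pow two_ne_zero, zero_add]
  calc _ ≤ ∑ n ∈ Finset.Ioc 0 ⌊x⌋₊,
        (Module.finrank ℚ K) ^ 2 * Real.log x * ArithmeticFunction.vonMangoldt n :=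
        Finset.sum_le_sum hterm
    _ = (Module.finrank ℚ K) ^ 2 * Real.log x * Chebyshev.psi x := by
        rw [← Finset.mul_sum, Chebyshev.psi]
    _ ≤ (Module.finrank ℚ K) ^ 2 * Real.log x * ((Real.log 4 + 4) * x) := by
        gcongr
        · exact mul_nonneg (sq_nonneg _) (Real.log_nonneg hx)
        · exact Chebyshev.psi_le_const_mul_self hx₀
    _ = _ := by ring

end IdealVonMangoldt

section CyclotomicImage

variable (K : Type*) [Field K] [NumberField K]

open IsCyclotomicExtension IntermediateField

lemma Gq_eq_range_autToPow (q : ℕ) [NeZero q] :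
    Gq K q = ((zeta_spec q K (CyclotomicField q K)).autToPow K).range := by
  rw [Gq, dif_pos (NeZero.pos q)]

variable {K} in
lemma mem_Gq_of_algEquiv {q : ℕ} [NeZero q] {L : Type*} [Field L] [Algebra K L]
    [Algebra.IsIntegral K L] {ζ : L}
    (hζ : IsPrimitiveRoot ζ q) (σ : L ≃ₐ[K] L) {u : (ZMod q)ˣ}
    (hσ : σ ζ = ζ ^ (u : ZMod q).val) : u ∈ Gq K q := by
  have := hζ.intermediateField_adjoin_isCyclotomicExtension K
  have : IsGalois K K⟮ζ⟯ := isGalois {q} K _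
  let e : CyclotomicField q K ≃ₐ[K] K⟮ζ⟯ := algEquiv {q} K _ _
  let τ : CyclotomicField q K ≃ₐ[K] CyclotomicField q K :=
    (e.trans (σ.restrictNormal K⟮ζ⟯)).trans e.symm
  have hζ' := zeta_spec q K (CyclotomicField q K)
  set ζ' := zeta q K (CyclotomicField q K)
  have he : (e ζ' : L) ^ q = 1 := by
    exact_mod_cast congrArg ((↑) : K⟮ζ⟯ → L) (by rw [← map_pow, hζ'.pow_eq_one, map_one])
  obtain ⟨j, -, hj⟩ := hζ.eq_pow_of_pow_eq_one he
  have hτ : τ ζ' = ζ' ^ (u : ZMod q).val := by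
    refine e.injective (Subtype.ext ?_)
    have hrestrict : ((σ.restrictNormal K⟮ζ⟯ (e ζ') : K⟮ζ⟯) : L) = σ (e ζ') :=
      σ.restrictNormal_commutes K⟮ζ⟯ (e ζ')
    simp only [τ, AlgEquiv.trans_apply, AlgEquiv.apply_symm_apply, map_pow, hrestrict,
      SubmonoidClass.coe_pow, ← hj, hσ, pow_right_comm]
  rw [Gq_eq_range_autToPow]
  refine ⟨τ, Units.ext (ZMod.val_injective q (hζ'.pow_inj (ZMod.val_lt _) (ZMod.val_lt _) ?_))⟩
  rw [hζ'.autToPow_spec K, hτ]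

lemma unitsMap_mem_Gq {q n : ℕ} [NeZero q] [NeZero n] (hqn : q ∣ n) {u : (ZMod n)ˣ}
    (hu : u ∈ Gq K n) : ZMod.unitsMap hqn u ∈ Gq K q := by
  have hζ := zeta_spec n K (CyclotomicField n K)
  rw [Gq_eq_range_autToPow] at hu
  obtain ⟨σ, rfl⟩ := hu
  obtain ⟨m, hm⟩ := hqn
  have : FiniteDimensional K (CyclotomicField n K) := finiteDimensional {n} K _
  have hζq := hζ.pow (NeZero.pos n) (hm.trans (mul_comm q m))
  refine mem_Gq_of_algEquiv hζq σ ?_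
  rw [map_pow, ← hζ.autToPow_spec K σ, pow_right_comm, ZMod.unitsMap_val, ZMod.cast_eq_val,
    ZMod.val_natCast]
  refine pow_eq_pow_of_modEq ?_ hζq.pow_eq_one
  exact (Nat.mod_modEq _ _).symm

lemma card_Gq (n : ℕ) [NeZero n] :
    Nat.card (Gq K n) = Module.finrank K (CyclotomicField n K) := by
  have : IsGalois K (CyclotomicField n K) := isGalois {n} K _
  have : FiniteDimensional K (CyclotomicField n K) := finiteDimensional {n} K _
  rw [Gq_eq_range_autToPow, ← IsGalois.card_aut_eq_finrank]
  exact Nat.card_congr (MonoidHom.ofInjective (IsPrimitiveRoot.autToPow_injective K _)).symm.toEquiv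

lemma totient_le_finrank_mul_card_Gq (n : ℕ) [NeZero n] :
    n.totient ≤ Module.finrank ℚ K * Nat.card (Gq K n) := by
  have : FiniteDimensional K (CyclotomicField n K) := finiteDimensional {n} K _
  have : FiniteDimensional ℚ (CyclotomicField n K) := FiniteDimensional.trans ℚ K _
  rw [card_Gq, Module.finrank_mul_finrank, ← Polynomial.natDegree_cyclotomic n ℚ,
    Polynomial.cyclotomic_eq_minpoly_rat (zeta_spec n K (CyclotomicField n K)) (NeZero.pos n)]
  exact minpoly.natDegree_le _

lemma index_Gq_le_finrank (n : ℕ) [NeZero n] : (Gq K n).index ≤ Module.finrank ℚ K := by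
  refine Nat.le_of_mul_le_mul_right ?_ (Nat.card_pos (α := Gq K n))
  rw [Subgroup.index_mul_card, Nat.card_eq_fintype_card, ZMod.card_units_eq_totient]
  exact totient_le_finrank_mul_card_Gq K n

/-- The moduli `q ≥ 1` carrying a primitive character that is trivial on `G_q`, i.e. those for
which the correction term in `ψ'_K` occurs at a primitive character. -/
def exceptionalModuli : Set ℕ :=
  {q | q ≠ 0 ∧ ∃ χ : DirichletCharacter ℂ q, χ.IsPrimitive ∧ ∀ a ∈ Gq K q, χ (a : ZMod q) = 1}

lemma card_le_finrank_of_subset_exceptionalModuli {t : Finset ℕ}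
    (ht : (t : Set ℕ) ⊆ exceptionalModuli K) : t.card ≤ Module.finrank ℚ K := by
  set n := ∏ q ∈ t, q
  have : NeZero n := ⟨Finset.prod_ne_zero_iff.mpr fun q hq ↦ (ht hq).1⟩
  have hdvd (q : t) : (q : ℕ) ∣ n := Finset.dvd_prod_of_mem _ q.2
  choose χ hprim htriv using fun q : t ↦ (ht q.2).2
  let lift (q : t) : (ZMod n)ˣ →* ℂˣ := (DirichletCharacter.changeLevel (hdvd q) (χ q)).toUnitHom
  have lift_mem_ker (q : t) : lift q ∈ (MonoidHom.domRestrictHom (Gq K n) ℂˣ).ker := by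
    have : NeZero (q : ℕ) := ⟨(ht q.2).1⟩
    refine MonoidHom.ext fun a ↦ Units.ext ?_
    have := htriv q _ (unitsMap_mem_Gq K (hdvd q) a.2)
    rw [ZMod.unitsMap_val] at this
    change ((lift q a : ℂˣ) : ℂ) = 1
    rwa [MulChar.coe_toUnitHom, DirichletCharacter.changeLevel_eq_cast_of_dvd]
  have lift_injective : Function.Injective lift := by
    intro q q' h
    have := congrArg DirichletCharacter.conductor ((DirichletCharacter.toUnitHom_inj _ _).mp h)
    rw [DirichletCharacter.conductor_changeLevel, DirichletCharacter.conductor_changeLevel,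
      hprim q, hprim q'] at this
    exact Subtype.ext this
  calc t.card = Nat.card t := by rw [Nat.card_eq_fintype_card, Fintype.card_coe]
    _ ≤ Nat.card (MonoidHom.domRestrictHom (Gq K n) ℂˣ).ker :=
        Nat.card_le_card_of_injective (fun q ↦ ⟨lift q, lift_mem_ker q⟩)
          fun q q' h ↦ lift_injective (Subtype.ext_iff.mp h)
    _ = (Gq K n).index := CommGroup.card_domRestrictHom_ker ℂ (Gq K n)
    _ ≤ Module.finrank ℚ K := index_Gq_le_finrank K n

lemma finite_exceptionalModuli : (exceptionalModuli K).Finite := by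
  by_contra hinfinite
  obtain ⟨t, ht, hcard⟩ :=
    Set.Infinite.exists_subset_card_eq hinfinite (Module.finrank ℚ K + 1)
  have := card_le_finrank_of_subset_exceptionalModuli K ht
  lia

end CyclotomicImage

section PartialSummation

lemma sum_Icc_mul_le_of_sum_le {w g : ℕ → ℝ} {c : ℝ} {k n : ℕ} (hkn : k ≤ n)
    (hw : AntitoneOn w (Set.Icc k n)) (hwn : 0 ≤ w n)
    (hg : ∀ U, k ≤ U → ∑ q ∈ Finset.Icc k U, g q ≤ c) :
    ∑ q ∈ Finset.Icc k n, w q * g q ≤ w k * c := by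
  suffices h : ∑ q ∈ Finset.Icc k n, w q * g q + w n * (c - ∑ q ∈ Finset.Icc k n, g q) ≤ w k * c by
    linarith [mul_nonneg hwn (sub_nonneg.mpr (hg n hkn))]
  clear hwn
  induction n, hkn using Nat.le_induction with
  | base => simp only [Finset.Icc_self, Finset.sum_singleton]; linarith
  | succ n hkn ih =>
    have hdecr : w (n + 1) ≤ w n :=
      hw ⟨hkn, n.le_succ⟩ ⟨hkn.trans n.le_succ, le_rfl⟩ n.le_succ
    have hprev := ih (hw.mono (Set.Icc_subset_Icc_right n.le_succ))
    rw [Finset.sum_Icc_succ_top (hkn.trans n.le_succ),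
      Finset.sum_Icc_succ_top (hkn.trans n.le_succ)]
    linarith [mul_le_mul_of_nonneg_right hdecr (sub_nonneg.mpr (hg n hkn))]

lemma sum_Icc_one_log_div_le {y : ℝ} (hy : 0 < y) (n : ℕ) :
    ∑ q ∈ Finset.Icc 1 n, Real.log (y / q) ≤ y := by
  have hsum : ∑ q ∈ Finset.Icc 1 n, Real.log (y / q) = Real.log (y ^ n / n.factorial) := by
    induction n with
    | zero => simp
    | succ n ih =>
      rw [Finset.sum_Icc_succ_top n.succ_pos, ih, ← Real.log_mul (by positivity) (by positivity),
        div_mul_div_comm, ← pow_succ, Nat.factorial_succ, Nat.cast_mul, mul_comm (n.factorial : ℝ)]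
  rw [hsum, Real.log_le_iff_le_exp (by positivity)]
  exact Real.pow_div_factorial_le_exp y hy.le n

lemma sum_Icc_two_mul_sub_one {k U : ℕ} (hkU : k ≤ U) :
    ∑ q ∈ Finset.Icc k U, (2 * q - 1 : ℝ) = U ^ 2 - (k - 1) ^ 2 := by
  induction U, hkU using Nat.le_induction with
  | base => rw [Finset.Icc_self, Finset.sum_singleton]; ring
  | succ U hkU ih =>
    rw [Finset.sum_Icc_succ_top (hkU.trans U.le_succ), ih]
    push_cast
    ring

lemma log_two_mul_div_nonneg {Q t : ℝ} (ht : 0 < t) (htQ : t ≤ Q) : 0 ≤ Real.log (2 * Q / t) :=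
  Real.log_nonneg ((one_le_div ht).mpr (by linarith))

lemma antitoneOn_log_two_mul_div_div {Q : ℝ} :
    AntitoneOn (fun t : ℝ ↦ Real.log (2 * Q / t) / t) (Set.Ioc 0 Q) := by
  rintro a ⟨ha, haQ⟩ b ⟨hb, -⟩ hab
  have hQ : 0 < Q := ha.trans_le haQ
  have hlog := log_two_mul_div_nonneg ha haQ
  dsimp only
  gcongr

lemma log_two_mul_div_div_mul_sq_le {Q t : ℝ} (hQ : 0 < Q) (ht : 1 ≤ t) :
    Real.log (2 * Q / t) / t * (t - 1) ^ 2 ≤ 2 * Q := by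
  have hlog : Real.log (2 * Q / t) ≤ 2 * Q / t := Real.log_le_self (by positivity)
  calc Real.log (2 * Q / t) / t * (t - 1) ^ 2 ≤ 2 * Q / t / t * t ^ 2 := by
        gcongr
        linarith
    _ = 2 * Q := by field_simp

lemma sum_Icc_log_div_mul_two_mul_sub_one_le {Q : ℝ} {k n : ℕ} (hQ : 0 < Q) (hk : 1 ≤ k)
    (hnQ : n ≤ Q) :
    ∑ q ∈ Finset.Icc k n, Real.log (2 * Q / q) / q * (2 * q - 1) ≤ 4 * Q := by
  have hnonneg : ∀ q ∈ Finset.Icc 1 n, 0 ≤ Real.log (2 * Q / q) := fun q hq ↦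
    log_two_mul_div_nonneg (Nat.cast_pos.mpr (Finset.mem_Icc.mp hq).1)
      ((Nat.cast_le.mpr (Finset.mem_Icc.mp hq).2).trans hnQ)
  have hsubset : Finset.Icc k n ⊆ Finset.Icc 1 n := Finset.Icc_subset_Icc_left hk
  calc _ ≤ ∑ q ∈ Finset.Icc k n, 2 * Real.log (2 * Q / q) := by
        refine Finset.sum_le_sum fun q hq ↦ ?_
        have hq₀ : (q : ℝ) ≠ 0 :=
          Nat.cast_ne_zero.mpr (Nat.ne_of_gt (Finset.mem_Icc.mp (hsubset hq)).1)
        have hquot := div_nonneg (hnonneg q (hsubset hq)) q.cast_nonneg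
        have hcancel := div_mul_cancel₀ (Real.log (2 * Q / q)) hq₀
        linarith
    _ ≤ ∑ q ∈ Finset.Icc 1 n, 2 * Real.log (2 * Q / q) :=
        Finset.sum_le_sum_of_subset_of_nonneg hsubset
          fun q hq _ ↦ mul_nonneg two_pos.le (hnonneg q hq)
    _ ≤ 4 * Q := by
        rw [← Finset.mul_sum]
        linarith [sum_Icc_one_log_div_le (mul_pos two_pos hQ) n]

lemma sum_Icc_log_div_mul_le {T : ℕ → ℝ} {B N Q : ℝ} (hB : 0 ≤ B) {k n : ℕ} (hk : 1 ≤ k)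
    (hkn : k ≤ n) (hnQ : n ≤ Q)
    (hT : ∀ U : ℕ, k ≤ U → ∑ q ∈ Finset.Icc k U, T q ≤ B * (N + U ^ 2)) :
    ∑ q ∈ Finset.Icc k n, Real.log (2 * Q / q) / q * T q ≤
      B * (Real.log (2 * Q / k) / k * N + 6 * Q) := by
  have hpos {q : ℕ} (hq : k ≤ q) : (0 : ℝ) < q := Nat.cast_pos.mpr (hk.trans hq)
  have hle {q : ℕ} (hq : q ≤ n) : (q : ℝ) ≤ Q := (Nat.cast_le.mpr hq).trans hnQ
  have hQ : 0 < Q := (hpos hkn).trans_le hnQ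
  set w : ℕ → ℝ := fun q ↦ Real.log (2 * Q / q) / q
  have hw : AntitoneOn w (Set.Icc k n) := fun a ha b hb hab ↦
    antitoneOn_log_two_mul_div_div ⟨hpos ha.1, hle ha.2⟩ ⟨hpos hb.1, hle hb.2⟩
      (Nat.cast_le.mpr hab)
  have hwn : 0 ≤ w n := div_nonneg (log_two_mul_div_nonneg (hpos hkn) hnQ) (by positivity)
  -- `2 * q - 1` is the increment of `q ^ 2`, so the partial sums of the excess are bounded.
  have hexcess : ∑ q ∈ Finset.Icc k n, w q * (T q - B * (2 * q - 1)) ≤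
      w k * (B * (N + (k - 1) ^ 2)) := by
    refine sum_Icc_mul_le_of_sum_le hkn hw hwn fun U hU ↦ ?_
    rw [Finset.sum_sub_distrib, ← Finset.mul_sum, sum_Icc_two_mul_sub_one hU]
    linarith [hT U hU]
  have hincrement : ∑ q ∈ Finset.Icc k n, w q * (2 * q - 1) ≤ 4 * Q :=
    sum_Icc_log_div_mul_two_mul_sub_one_le hQ hk hnQ
  have hboundary : w k * (k - 1) ^ 2 ≤ 2 * Q :=
    log_two_mul_div_div_mul_sq_le hQ (Nat.one_le_cast.mpr hk)
  calc ∑ q ∈ Finset.Icc k n, w q * T q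
      = ∑ q ∈ Finset.Icc k n, w q * (T q - B * (2 * q - 1)) +
          B * ∑ q ∈ Finset.Icc k n, w q * (2 * q - 1) := by
        rw [Finset.mul_sum, ← Finset.sum_add_distrib]
        exact Finset.sum_congr rfl fun q _ ↦ by ring
    _ ≤ w k * (B * (N + (k - 1) ^ 2)) + B * (4 * Q) := by gcongr
    _ = B * (w k * N + w k * (k - 1) ^ 2 + 4 * Q) := by ring
    _ ≤ B * (w k * N + 2 * Q + 4 * Q) := by gcongr
    _ = _ := by ring

lemma sum_Ioc_floor_log_div_mul_le {T : ℕ → ℝ} {B L N Q R : ℝ} (hB : 0 ≤ B) (hN : 0 ≤ N)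
    (hL : 0 ≤ L) (hQ : 0 < Q) (hR : 0 < R) (hQL : Real.log (2 * Q) ≤ L) (hT₀ : ∀ q, 0 ≤ T q)
    (hT : ∀ U : ℕ, ∑ q ∈ Finset.Icc 1 U, T q ≤ B * (N + U ^ 2)) :
    ∑ q ∈ Finset.Ioc ⌊R⌋₊ ⌊Q⌋₊, Real.log (2 * Q / q) / q * T q ≤ B * (L / R * N + 6 * Q) := by
  rw [← Finset.Icc_add_one_left_eq_Ioc]
  set k := ⌊R⌋₊ + 1 with hk_def
  rcases lt_or_ge ⌊Q⌋₊ k with hQk | hkQ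
  · rw [Finset.Icc_eq_empty_of_lt hQk, Finset.sum_empty]
    positivity
  have hk : 1 ≤ k := Nat.le_add_left 1 _
  have hk₁ : (1 : ℝ) ≤ k := Nat.one_le_cast.mpr hk
  have hRk : R ≤ k := by
    rw [hk_def, Nat.cast_succ]
    exact (Nat.lt_floor_add_one R).le
  have hlog : Real.log (2 * Q / k) ≤ L := by
    refine (Real.log_le_log (by positivity) ?_).trans hQL
    exact div_le_self (by positivity) hk₁
  calc _ ≤ B * (Real.log (2 * Q / k) / k * N + 6 * Q) := by
        refine sum_Icc_log_div_mul_le hB hk hkQ (Nat.floor_le hQ.le) fun U _ ↦ (hT U).trans' ?_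
        exact Finset.sum_le_sum_of_subset_of_nonneg (Finset.Icc_subset_Icc_left hk)
          fun q _ _ ↦ hT₀ q
    _ ≤ B * (L / R * N + 6 * Q) := by gcongr

end PartialSummation

section LargeModuli

/-- `∑_{R < q ≤ Q} φ(q)⁻¹ log(2Q/q) ∑_χ F(χ)`, the inner sum running over the primitive characters
modulo `q`: the mean value appearing in the large moduli bound. -/
noncomputable def logMeanValue (Q R : ℝ) (F : ∀ q : ℕ, DirichletCharacter ℂ q → ℝ) : ℝ :=
  ∑ q ∈ Finset.Ioc ⌊R⌋₊ ⌊Q⌋₊, (1 / q.totient : ℝ) * Real.log (2 * Q / q) *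
    ∑ᶠ χ ∈ {χ : DirichletCharacter ℂ q | χ.IsPrimitive}, F q χ

lemma log_two_mul_div_nonneg_of_mem_Ioc {Q R : ℝ} {q : ℕ} (hq : q ∈ Finset.Ioc ⌊R⌋₊ ⌊Q⌋₊) :
    0 ≤ Real.log (2 * Q / q) := by
  obtain ⟨hRq, hqQ⟩ := Finset.mem_Ioc.mp hq
  have hq₀ : 0 < q := pos_of_gt hRq
  exact log_two_mul_div_nonneg (Nat.cast_pos.mpr hq₀) (Nat.le_floor_iff' hq₀.ne' |>.mp hqQ)

lemma logMeanValue_le_two_mul_add {Q R : ℝ} {F G H : ∀ q : ℕ, DirichletCharacter ℂ q → ℝ}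
    (h : ∀ q χ, F q χ ≤ 2 * (G q χ + H q χ)) :
    logMeanValue Q R F ≤ 2 * (logMeanValue Q R G + logMeanValue Q R H) := by
  simp only [logMeanValue, finsum_isPrimitive_eq_sum]
  rw [← Finset.sum_add_distrib, Finset.mul_sum]
  refine Finset.sum_le_sum fun q hq ↦ ?_
  have hlog := log_two_mul_div_nonneg_of_mem_Ioc hq
  rw [← mul_add, mul_left_comm, ← Finset.sum_add_distrib]
  gcongr
  rw [Finset.mul_sum]
  exact Finset.sum_le_sum fun χ _ ↦ h q χ

lemma log_two_mul_le_two_mul_log {x Q : ℝ} (hx : 2 ≤ x) (hQ : 0 < Q) (hQx : Q ≤ x) :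
    Real.log (2 * Q) ≤ 2 * Real.log x := by
  rw [two_mul (Real.log x), ← Real.log_mul (by linarith) (by linarith)]
  gcongr

lemma sum_isPrimitive_le_totient_mul {q : ℕ} [NeZero q] {f : DirichletCharacter ℂ q → ℝ} {c : ℝ}
    (hc : 0 ≤ c) (hf : ∀ χ, f χ ≤ c) :
    ∑ᶠ χ ∈ {χ : DirichletCharacter ℂ q | χ.IsPrimitive}, f χ ≤ q.totient * c := by
  rw [finsum_isPrimitive_eq_sum,
    ← DirichletCharacter.card_eq_totient_of_hasEnoughRootsOfUnity ℂ q, Nat.card_eq_fintype_card]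
  refine (Finset.sum_le_card_nsmul _ _ c fun χ _ ↦ hf χ).trans ?_
  rw [nsmul_eq_mul]
  gcongr
  exact Finset.card_le_univ _

variable (K : Type*) [Field K] [NumberField K]

lemma exists_sum_finsum_norm_psiKChi_sq_le :
    ∃ C : ℝ, 0 < C ∧ ∀ x : ℝ, 1 ≤ x → ∀ U : ℕ,
      ∑ q ∈ Finset.Icc 1 U, (q / q.totient : ℝ) *
        ∑ᶠ χ ∈ {χ : DirichletCharacter ℂ q | χ.IsPrimitive}, ‖psiKChi K x χ‖ ^ 2 ≤
      C * (x * Real.log x) * (2 * x + U ^ 2) := by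
  have hrank : (0 : ℝ) < Module.finrank ℚ K := Nat.cast_pos.mpr Module.finrank_pos
  have hsieve := largeSieveConst_pos
  refine ⟨largeSieveConst * ((Module.finrank ℚ K) ^ 2 * (Real.log 4 + 4)), by positivity,
    fun x hx U ↦ ?_⟩
  have hlength : ((⌊x⌋₊ + 1 : ℕ) : ℝ) ≤ 2 * x := by
    push_cast
    linarith [Nat.floor_le (zero_le_one.trans hx)]
  simp_rw [psiKChi_eq_sum (zero_le_one.trans hx)]
  calc _ ≤ _ := multiplicative_large_sieve (⌊x⌋₊ + 1) U fun n ↦ (normCoeff K n : ℂ)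
    _ ≤ largeSieveConst * (2 * x + U ^ 2) *
        ((Module.finrank ℚ K) ^ 2 * (Real.log 4 + 4) * (x * Real.log x)) := by
      gcongr
      exact sum_norm_normCoeff_sq_le hx
    _ = _ := by ring

lemma exists_logMeanValue_norm_psiKChi_sq_le :
    ∃ C : ℝ, 0 < C ∧ ∀ x Q R : ℝ, 2 ≤ x → 0 < Q → Q ≤ x → x * Real.log x ≤ R * Q →
      logMeanValue Q R (fun _ χ ↦ ‖psiKChi K x χ‖ ^ 2) ≤ C * (x * Q * Real.log x) := by
  obtain ⟨C, hC, hsieve⟩ := exists_sum_finsum_norm_psiKChi_sq_le K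
  refine ⟨10 * C, by positivity, fun x Q R hx hQ hQx hR ↦ ?_⟩
  have hx₀ : 0 < x := by linarith
  have hlog : 0 < Real.log x := Real.log_pos (by linarith)
  have hR₀ : 0 < R := pos_of_mul_pos_left ((mul_pos hx₀ hlog).trans_le hR) hQ.le
  set T : ℕ → ℝ := fun q ↦ (q / q.totient : ℝ) *
    ∑ᶠ χ ∈ {χ : DirichletCharacter ℂ q | χ.IsPrimitive}, ‖psiKChi K x χ‖ ^ 2 with hT
  have hT₀ (q : ℕ) : 0 ≤ T q := by
    simp only [hT, finsum_isPrimitive_eq_sum]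
    positivity
  have hvalue : logMeanValue Q R (fun _ χ ↦ ‖psiKChi K x χ‖ ^ 2) =
      ∑ q ∈ Finset.Ioc ⌊R⌋₊ ⌊Q⌋₊, Real.log (2 * Q / q) / q * T q := by
    refine Finset.sum_congr rfl fun q hq ↦ ?_
    have hq₀ : (q : ℝ) ≠ 0 := Nat.cast_ne_zero.mpr (pos_of_gt (Finset.mem_Ioc.mp hq).1).ne'
    simp only [hT]
    field_simp
  have hlog_le := log_two_mul_le_two_mul_log hx hQ hQx
  have hratio : x * Real.log x / R ≤ Q := (div_le_iff₀' hR₀).mpr hR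
  calc _ = _ := hvalue
    _ ≤ C * (x * Real.log x) * (2 * Real.log x / R * (2 * x) + 6 * Q) :=
        sum_Ioc_floor_log_div_mul_le (by positivity) (by positivity) (by positivity) hQ hR₀
          hlog_le hT₀ (hsieve x (by linarith))
    _ = C * (x * Real.log x) * (4 * (x * Real.log x / R) + 6 * Q) := by ring
    _ ≤ C * (x * Real.log x) * (4 * Q + 6 * Q) := by gcongr
    _ = 10 * C * (x * Q * Real.log x) := by ring

/-- The square of the correction term of `ψ'_K(x, χ∘N)`. -/
noncomputable def correctionSq (x : ℝ) (q : ℕ) (χ : DirichletCharacter ℂ q) : ℝ :=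
  if ∀ a ∈ Gq K q, χ (a : ZMod q) = 1 then x ^ 2 else 0

lemma norm_psiKChi'_sq_le (x : ℝ) (q : ℕ) (χ : DirichletCharacter ℂ q) :
    ‖psiKChi' K x χ‖ ^ 2 ≤ 2 * (‖psiKChi K x χ‖ ^ 2 + correctionSq K x q χ) := by
  rw [psiKChi', correctionSq]
  split_ifs
  · calc ‖psiKChi K x χ - x‖ ^ 2 ≤ (‖psiKChi K x χ‖ + ‖(x : ℂ)‖) ^ 2 := by
          gcongr
          exact norm_sub_le _ _
      _ ≤ 2 * (‖psiKChi K x χ‖ ^ 2 + ‖(x : ℂ)‖ ^ 2) := add_sq_le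
      _ = 2 * (‖psiKChi K x χ‖ ^ 2 + x ^ 2) := by
          rw [Complex.norm_real, Real.norm_eq_abs, sq_abs]
  · rw [add_zero]
    exact le_mul_of_one_le_left (sq_nonneg _) one_le_two

lemma finsum_correctionSq_le (x : ℝ) (q : ℕ) [NeZero q] :
    ∑ᶠ χ ∈ {χ : DirichletCharacter ℂ q | χ.IsPrimitive}, correctionSq K x q χ ≤
      if q ∈ exceptionalModuli K then q.totient * x ^ 2 else 0 := by
  split_ifs with hq
  · refine sum_isPrimitive_le_totient_mul (sq_nonneg x) fun χ ↦ ?_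
    rw [correctionSq]
    split_ifs
    exacts [le_rfl, sq_nonneg x]
  · refine (finsum_mem_eq_zero_of_forall_eq_zero fun χ hχ ↦ if_neg fun htriv ↦ hq ?_).le
    exact ⟨NeZero.ne q, χ, hχ, htriv⟩

lemma logMeanValue_correctionSq_le {x Q R : ℝ} (hx : 2 ≤ x) (hQ : 0 < Q) (hQx : Q ≤ x)
    (hR : x * Real.log x ≤ R * Q) :
    logMeanValue Q R (correctionSq K x) ≤
      4 * (∑ q ∈ (finite_exceptionalModuli K).toFinset, q : ℝ) * (x * Q * Real.log x) := by
  have hlog : 1 / 2 ≤ Real.log x := by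
    linarith [Real.log_two_gt_d9, Real.log_le_log two_pos hx]
  have hterm : ∀ q ∈ Finset.Ioc ⌊R⌋₊ ⌊Q⌋₊, (1 / q.totient : ℝ) * Real.log (2 * Q / q) *
      ∑ᶠ χ ∈ {χ : DirichletCharacter ℂ q | χ.IsPrimitive}, correctionSq K x q χ ≤
        if q ∈ exceptionalModuli K then 4 * q * (x * Q * Real.log x) else 0 := by
    intro q hq
    have hlog_nonneg := log_two_mul_div_nonneg_of_mem_Ioc hq
    have hRq : R < q := Nat.lt_of_floor_lt (Finset.mem_Ioc.mp hq).1
    have hq₀ : 0 < q := pos_of_gt (Finset.mem_Ioc.mp hq).1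
    have : NeZero q := ⟨hq₀.ne'⟩
    refine (mul_le_mul_of_nonneg_left (finsum_correctionSq_le K x q) (by positivity)).trans ?_
    split_ifs
    · have hlog_le : Real.log (2 * Q / q) ≤ 2 * Real.log x := by
        refine le_trans ?_ (log_two_mul_le_two_mul_log hx hQ hQx)
        gcongr
        exact div_le_self (by positivity) (Nat.one_le_cast.mpr hq₀)
      -- As `x * log x ≤ R * Q ≤ q * Q`, one factor `x` of the correction `x ^ 2` is `O(q * Q)`.
      have hx_le : x ≤ 2 * (q * Q) := by
        linarith [mul_le_mul_of_nonneg_left hlog (show 0 ≤ x by linarith),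
          mul_le_mul_of_nonneg_right hRq.le hQ.le]
      calc _ = Real.log (2 * Q / q) * x * x := by field_simp
        _ ≤ 2 * Real.log x * x * (2 * (q * Q)) := by gcongr
        _ = _ := by ring
    · rw [mul_zero]
  calc _ ≤ _ := Finset.sum_le_sum hterm
    _ ≤ ∑ q ∈ (finite_exceptionalModuli K).toFinset, 4 * q * (x * Q * Real.log x) := by
      rw [← Finset.sum_filter]
      refine Finset.sum_le_sum_of_subset_of_nonneg (fun q hq ↦ ?_) fun q _ _ ↦ by positivity
      exact (Set.Finite.mem_toFinset _).mpr (Finset.mem_filter.mp hq).2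
    _ = _ := by rw [Finset.mul_sum, Finset.sum_mul]

end LargeModuli

theorem large_moduli_bound_general (K : Type*) [Field K] [NumberField K] :
    ∃ C : ℝ, 0 < C ∧ ∀ x Q R : ℝ, 2 ≤ x → 0 < Q → Q ≤ x → x * Real.log x ≤ R * Q →
      ∑ q ∈ Finset.Ioc ⌊R⌋₊ ⌊Q⌋₊,
          (1 / q.totient : ℝ) * Real.log (2 * Q / q) *
            ∑ᶠ χ ∈ {χ : DirichletCharacter ℂ q | χ.IsPrimitive}, ‖psiKChi' K x χ‖ ^ 2 ≤
        C * (x * Q * Real.log x) := by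
  obtain ⟨C, hC, hmain⟩ := exists_logMeanValue_norm_psiKChi_sq_le K
  set E := 4 * (∑ q ∈ (finite_exceptionalModuli K).toFinset, q : ℝ)
  refine ⟨2 * (C + E), by positivity, fun x Q R hx hQ hQx hR ↦ ?_⟩
  calc logMeanValue Q R (fun _ χ ↦ ‖psiKChi' K x χ‖ ^ 2)
      ≤ 2 * (logMeanValue Q R (fun _ χ ↦ ‖psiKChi K x χ‖ ^ 2) +
          logMeanValue Q R (correctionSq K x)) :=
        logMeanValue_le_two_mul_add (norm_psiKChi'_sq_le K x)
    _ ≤ 2 * (C * (x * Q * Real.log x) + E * (x * Q * Real.log x)) := by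
        gcongr
        · exact hmain x Q R hx hQ hQx hR
        · exact logMeanValue_correctionSq_le K hx hQ hQx hR
    _ = 2 * (C + E) * (x * Q * Real.log x) := by ring

lemma mul_log_le_rpow_mul {x Q M : ℝ} (hx : 1 < x) (hQ : x * Real.log x ^ (-M) ≤ Q) :
    x * Real.log x ≤ Real.log x ^ (M + 1) * Q := by
  have hlog : 0 < Real.log x := Real.log_pos hx
  calc x * Real.log x = Real.log x ^ (M + 1) * (x * Real.log x ^ (-M)) := by
        rw [mul_left_comm, ← Real.rpow_add hlog, add_neg_cancel_comm, Real.rpow_one]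
    _ ≤ Real.log x ^ (M + 1) * Q := by gcongr

/-- **Large moduli.** For fixed `M > 0`, with `Q₁ = (log x)^{M+1}`: for all `x ≥ 2` and
`x (log x)^{-M} ≤ Q ≤ x`,
`∑_{Q₁ < q ≤ Q} (1/φ(q)) log(2Q/q) ∑_{χ primitive mod q} |ψ'_K(x, χ∘N)|² ≪ x Q log x`,
the implied constant depending only on `K` and `M`. -/
theorem large_moduli_bound (K : Type*) [Field K] [NumberField K] [IsGalois ℚ K]
    (M : ℝ) (hM : 0 < M) :
    ∃ C : ℝ, 0 < C ∧ ∀ x Q : ℝ, 2 ≤ x → x * Real.log x ^ (-M) ≤ Q → Q ≤ x →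
      ∑ q ∈ Finset.Ioc ⌊Real.log x ^ (M + 1)⌋₊ ⌊Q⌋₊,
          (1 / q.totient : ℝ) * Real.log (2 * Q / q) *
            ∑ᶠ χ ∈ {χ : DirichletCharacter ℂ q | χ.IsPrimitive}, ‖psiKChi' K x χ‖ ^ 2 ≤
        C * (x * Q * Real.log x) := by
  obtain ⟨C, hC, hbound⟩ := large_moduli_bound_general K
  refine ⟨C, hC, fun x Q hx hxQ hQx ↦ ?_⟩
  have hlog : 0 < Real.log x := Real.log_pos (by linarith)
  have hQ : 0 < Q := hxQ.trans_lt' (by positivity)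
  exact hbound x Q _ hx hQ hQx (mul_log_le_rpow_mul (by linarith) hxQ)
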